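/- Let (Ω, F, P) be a probability space, K ≥ 1 an integer, δ ∈ (0,1), and α ∈ ℝ. Let R : Fin K → ℝ be fixed real numbers that are nonincreasing in k (i.e., R k' ≤ R k whenever k ≤ k'), and let E : Fin K → Set Ω be measurable events (the event 'test k passes') such that for every k with R k > α one has P[E k] ≤ δ. Define the fixed-sequence selection: an index k is selected if E j holds for every j ≥ k, and the output index J(ω) is the smallest selected index (when one exists). Then P[{ω : J(ω) exists and R (J(ω)) > α}] ≤ δ. -/

import Mathlib

open MeasureTheory ProbabilityTheory Set

/-- Learn Then Test fixed-sequence testing guarantee: with true risks `R` nonincreasing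
along the grid, each test valid at full level `δ` whenever `R k > α`, selection defined as
"all tests at indices `≥ k` pass", and `J ω` the smallest selected index when one exists,
the probability that a selected index is returned with true risk above `α` is at most `δ`. -/
theorem stmt1 {Ω : Type*} [MeasurableSpace Ω] (P : Measure Ω) [IsProbabilityMeasure P]
    (K : ℕ) (hK : 1 ≤ K) (δ α : ℝ) (hδ : δ ∈ Set.Ioo (0 : ℝ) 1)
    (R : Fin K → ℝ) (hR : ∀ k k' : Fin K, k ≤ k' → R k' ≤ R k)
    (E : Fin K → Set Ω) (hE : ∀ k, MeasurableSet (E k))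
    (h : ∀ k : Fin K, α < R k → P (E k) ≤ ENNReal.ofReal δ)
    (J : Ω → Fin K)
    (hJ : ∀ ω, (∃ k : Fin K, ∀ j : Fin K, k ≤ j → ω ∈ E j) →
      ((∀ j : Fin K, J ω ≤ j → ω ∈ E j) ∧
        ∀ k : Fin K, (∀ j : Fin K, k ≤ j → ω ∈ E j) → J ω ≤ k)) :
    P {ω | (∃ k : Fin K, ∀ j : Fin K, k ≤ j → ω ∈ E j) ∧ α < R (J ω)} ≤
      ENNReal.ofReal δ := by
  by_cases hne : ∃ k, α < R k
  · obtain ⟨m, hm, hmax⟩ := Finset.exists_max_image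
      (Finset.univ.filter fun k => α < R k) id
      (by obtain ⟨k, hk⟩ := hne; exact ⟨k, by simpa using hk⟩)
    refine le_trans (measure_mono ?_) (h m (by simpa using hm))
    rintro ω ⟨hex, hr⟩
    exact (hJ ω hex).1 m (hmax (J ω) (by simpa using hr))
  · have : {ω | (∃ k : Fin K, ∀ j : Fin K, k ≤ j → ω ∈ E j) ∧ α < R (J ω)} = ∅ := by
      ext ω
      simp only [mem_setOf_eq, mem_empty_iff_false, iff_false]
      rintro ⟨-, hr⟩
      exact hne ⟨_, hr⟩
    rw [this, measure_empty]
    exact zero_le
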